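/- Let (S, m) be a Noetherian local ring, let p ⊆ S be a prime ideal with dim(S/p) = 1, and let J ⊆ S be an ideal with radical √J = p. Let J^gen = { g ∈ S : there exists s ∈ S \ p with s·g ∈ J } be the p-saturation of J. Then J = J^gen if and only if the quotient S/J is a Cohen–Macaulay local ring of Krull dimension 1. -/

import Mathlib

open IsLocalRing

/-- The depth of a module `M` over a local ring `R`: the supremum of the lengths of
`M`-regular sequences consisting of elements of the maximal ideal. -/
noncomputable def moduleDepth (R M : Type*) [CommRing R] [IsLocalRing R]
    [AddCommGroup M] [Module R M] : ℕ∞ :=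
  sSup {n : ℕ∞ | ∃ rs : List R, (rs.length : ℕ∞) = n ∧
    (∀ r ∈ rs, r ∈ maximalIdeal R) ∧ RingTheory.Sequence.IsRegular M rs}

/-!
The equality `J = J^gen` says exactly that `J` is primary. When `S ⧸ √J` is one-dimensional, this is
equivalent to the existence of an `S ⧸ J`-regular element `x` of the maximal ideal `m`. If `J` is
primary, then every element of `m` outside `√J` is regular. Conversely, if `s * g ∈ J` with `s ∉
√J`, then the radical of `(J : g)` strictly contains the prime `√J`, hence contains `m`, so `x ^ n *
g ∈ J` for some `n`, and cancelling the regular element `x ^ n` gives `g ∈ J`. Such an `x` exists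
precisely when the depth is positive, and the depth is at most `dim (S ⧸ J) = dim (S ⧸ √J) = 1`.
-/

section Depth

variable {R M : Type*} [CommRing R] [AddCommGroup M] [Module R M] [Module.Finite R M]

theorem length_le_supportDim_of_isRegular {rs : List R}
    (hrs : RingTheory.Sequence.IsRegular M rs) :
    (rs.length : WithBot ℕ∞) ≤ Module.supportDim R M := by
  induction rs generalizing M with
  | nil =>
    have := hrs.nontrivial
    have : Nonempty (Module.support R M) := Module.nonempty_support_of_nontrivial.to_subtype
    exact Order.krullDim_nonneg
  | cons r rs ih =>
    obtain ⟨hr, hrs⟩ := (RingTheory.Sequence.isRegular_cons_iff M r rs).mp hrs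
    calc ((r :: rs).length : WithBot ℕ∞)
      _ = rs.length + 1 := by simp
      _ ≤ Module.supportDim R (QuotSMulTop r M) + 1 := by gcongr; exact ih hrs
      _ ≤ Module.supportDim R M :=
        Module.supportDim_quotSMulTop_succ_le_of_notMem_minimalPrimes
          fun _ ↦ hr.notMem_of_mem_minimalPrimes

variable [IsLocalRing R] [Nontrivial M]

theorem moduleDepth_le_supportDim : (moduleDepth R M : WithBot ℕ∞) ≤ Module.supportDim R M := by
  obtain ⟨d, hd⟩ := WithBot.ne_bot_iff_exists.mp (Module.supportDim_ne_bot_of_nontrivial R M)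
  rw [← hd, WithBot.coe_le_coe]
  refine sSup_le ?_
  rintro _ ⟨rs, rfl, -, hrs⟩
  exact WithBot.coe_le_coe.mp (hd ▸ length_le_supportDim_of_isRegular hrs)

theorem one_le_moduleDepth_iff :
    1 ≤ moduleDepth R M ↔ ∃ x ∈ maximalIdeal R, IsSMulRegular M x := by
  constructor
  · intro hdepth
    obtain ⟨_, ⟨rs, rfl, hmem, hrs⟩, hpos⟩ := lt_sSup_iff.mp (Order.one_le_iff_pos.mp hdepth)
    cases rs with
    | nil => simp at hpos
    | cons x rs =>
      exact ⟨x, hmem x List.mem_cons_self,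
        ((RingTheory.Sequence.isRegular_cons_iff M x rs).mp hrs).1⟩
  · rintro ⟨x, hxm, hx⟩
    have hmem : ∀ r ∈ [x], r ∈ maximalIdeal R := by simpa using hxm
    have hreg : RingTheory.Sequence.IsRegular M [x] :=
      .of_isWeaklyRegular_of_mem_maximalIdeal M hmem
        ((RingTheory.Sequence.isWeaklyRegular_singleton_iff M x).mpr hx)
    exact le_sSup ⟨[x], by simp, hmem, hreg⟩

end Depth

section Primary

variable {R : Type*} [CommRing R] {I : Ideal R}

theorem eq_saturation_iff_isPrimary [hprime : I.radical.IsPrime] {K : Ideal R}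
    (hK : ∀ g, g ∈ K ↔ ∃ s ∉ I.radical, s * g ∈ I) : I = K ↔ I.IsPrimary := by
  have hI : I ≠ ⊤ := fun h ↦ hprime.ne_top (Ideal.radical_eq_top.mpr h)
  have hle : I ≤ K := fun g hg ↦
    (hK g).mpr ⟨1, (Ideal.ne_top_iff_one _).mp hprime.ne_top, by simpa using hg⟩
  rw [Ideal.isPrimary_iff, and_iff_right hI]
  constructor
  · rintro rfl x y hxy
    exact or_iff_not_imp_right.mpr fun hy ↦ (hK x).mpr ⟨y, hy, mul_comm x y ▸ hxy⟩
  · refine fun hprim ↦ hle.antisymm fun g hg ↦ ?_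
    obtain ⟨s, hs, hsg⟩ := (hK g).mp hg
    exact (hprim (mul_comm s g ▸ hsg)).resolve_right hs

theorem isSMulRegular_quotient_of_isPrimary (hI : I.IsPrimary) {x : R} (hx : x ∉ I.radical) :
    IsSMulRegular (R ⧸ I) x := by
  rw [isSMulRegular_quotient_iff_mem_of_smul_mem]
  intro g hxg
  exact ((Ideal.isPrimary_iff.mp hI).2 (mul_comm x g ▸ hxg)).resolve_right hx

theorem mem_of_isSMulRegular_quotient_of_mem_radical_colon {x g : R}
    (hx : IsSMulRegular (R ⧸ I) x) (hxg : x ∈ (I.colon {g}).radical) : g ∈ I := by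
  obtain ⟨n, hn⟩ := hxg
  exact mem_of_isSMulRegular_quotient_of_smul_mem (hx.pow n) (Submodule.mem_colon_singleton.mp hn)

theorem ringKrullDim_quotient_radical (I : Ideal R) :
    ringKrullDim (R ⧸ I.radical) = ringKrullDim (R ⧸ I) := by
  rw [ringKrullDim_quotient, ringKrullDim_quotient, PrimeSpectrum.zeroLocus_radical]

variable [IsLocalRing R]

theorem lt_maximalIdeal_of_ringKrullDim_quotient_ne_zero (hI : I ≠ ⊤)
    (hdim : ringKrullDim (R ⧸ I) ≠ 0) : I < maximalIdeal R := by
  refine (le_maximalIdeal hI).lt_of_ne ?_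
  rintro rfl
  exact hdim (ringKrullDim_eq_zero_of_field (ResidueField R))

theorem maximalIdeal_le_radical_of_ringKrullDim_quotient_le_one {p : Ideal R} [hp : p.IsPrime]
    (hdim : ringKrullDim (R ⧸ p) ≤ 1) (hpI : p < I) : maximalIdeal R ≤ I.radical := by
  rw [ringKrullDim_quotient, Order.krullDim_le_one_iff] at hdim
  rw [Ideal.radical_eq_sInf]
  refine le_sInf fun q ⟨hIq, hq⟩ ↦ ?_
  have hpq : p < q := hpI.trans_le hIq
  rcases hdim ⟨⟨q, hq⟩, hpq.le⟩ with hmin | hmax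
  · exact absurd (hmin (b := ⟨⟨p, hp⟩, le_refl p⟩) hpq.le) hpq.not_ge
  · exact hmax (b := ⟨⟨maximalIdeal R, inferInstance⟩, le_maximalIdeal hp.ne_top⟩)
      (le_maximalIdeal hq.ne_top)

theorem isPrimary_of_isSMulRegular_quotient [hprime : I.radical.IsPrime]
    (hdim : ringKrullDim (R ⧸ I.radical) ≤ 1) {x : R} (hxm : x ∈ maximalIdeal R)
    (hx : IsSMulRegular (R ⧸ I) x) : I.IsPrimary := by
  refine Ideal.isPrimary_iff.mpr ⟨fun h ↦ hprime.ne_top (Ideal.radical_eq_top.mpr h),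
    fun {g s} hgs ↦ or_iff_not_imp_right.mpr fun hs ↦ ?_⟩
  have hs_colon : s ∈ I.colon {g} := by
    rwa [Submodule.mem_colon_singleton, smul_eq_mul, mul_comm]
  have hlt : I.radical < (I.colon {g}).radical :=
    SetLike.lt_iff_le_and_exists.mpr
      ⟨Ideal.radical_mono Ideal.le_colon, s, Ideal.le_radical hs_colon, hs⟩
  have hx_colon : x ∈ (I.colon {g}).radical.radical :=
    maximalIdeal_le_radical_of_ringKrullDim_quotient_le_one hdim hlt hxm
  rw [Ideal.radical_idem] at hx_colon
  exact mem_of_isSMulRegular_quotient_of_mem_radical_colon hx hx_colon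

theorem isPrimary_iff_exists_isSMulRegular_quotient [hprime : I.radical.IsPrime]
    (hdim : ringKrullDim (R ⧸ I.radical) = 1) :
    I.IsPrimary ↔ ∃ x ∈ maximalIdeal R, IsSMulRegular (R ⧸ I) x := by
  constructor
  · intro hI
    have hlt : I.radical < maximalIdeal R :=
      lt_maximalIdeal_of_ringKrullDim_quotient_ne_zero hprime.ne_top (hdim ▸ one_ne_zero)
    obtain ⟨x, hxm, hx⟩ := SetLike.exists_of_lt hlt
    exact ⟨x, hxm, isSMulRegular_quotient_of_isPrimary hI hx⟩
  · rintro ⟨x, hxm, hx⟩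
    exact isPrimary_of_isSMulRegular_quotient hdim.le hxm hx

end Primary

theorem stmt_8_general {S : Type*} [CommRing S] [IsLocalRing S]
    (p : Ideal S) (hp : p.IsPrime)
    (hdimp : Order.krullDim (PrimeSpectrum (S ⧸ p)) = 1)
    (J : Ideal S) (hrad : J.radical = p)
    (Jgen : Ideal S) (hgen : ∀ g : S, g ∈ Jgen ↔ ∃ s ∉ p, s * g ∈ J) :
    J = Jgen ↔
      (moduleDepth S (S ⧸ J) = 1 ∧ Order.krullDim (PrimeSpectrum (S ⧸ J)) = 1) := by
  subst hrad
  have hdimJ : ringKrullDim (S ⧸ J) = 1 := (ringKrullDim_quotient_radical J).symm.trans hdimp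
  have : Nontrivial (S ⧸ J) :=
    Ideal.Quotient.nontrivial_iff.mpr fun h ↦ hp.ne_top (Ideal.radical_eq_top.mpr h)
  have hdepth_le : moduleDepth S (S ⧸ J) ≤ 1 := by
    have hle := moduleDepth_le_supportDim (R := S) (M := S ⧸ J)
    rw [Module.supportDim_quotient_eq_ringKrullDim, hdimJ] at hle
    exact_mod_cast hle
  calc J = Jgen
    _ ↔ J.IsPrimary := eq_saturation_iff_isPrimary hgen
    _ ↔ ∃ x ∈ maximalIdeal S, IsSMulRegular (S ⧸ J) x :=
      isPrimary_iff_exists_isSMulRegular_quotient hdimp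
    _ ↔ 1 ≤ moduleDepth S (S ⧸ J) := one_le_moduleDepth_iff.symm
    _ ↔ moduleDepth S (S ⧸ J) = 1 := hdepth_le.ge_iff_eq
    _ ↔ moduleDepth S (S ⧸ J) = 1 ∧ Order.krullDim (PrimeSpectrum (S ⧸ J)) = 1 :=
      (and_iff_left hdimJ).symm

/-- Let `(S, m)` be a Noetherian local ring, `p` a prime ideal with
`dim (S/p) = 1`, and `J` an ideal with `√J = p`. Then `J = J^gen` if and only if `S/J` is
a Cohen–Macaulay local ring of Krull dimension `1` (depth and dimension both `1`), where
`J^gen` is the `p`-saturation of `J`. -/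
theorem stmt_8 {S : Type*} [CommRing S] [IsLocalRing S] [IsNoetherianRing S]
    (p : Ideal S) (hp : p.IsPrime)
    (hdimp : Order.krullDim (PrimeSpectrum (S ⧸ p)) = 1)
    (J : Ideal S) (hrad : J.radical = p)
    (Jgen : Ideal S) (hgen : ∀ g : S, g ∈ Jgen ↔ ∃ s ∉ p, s * g ∈ J) :
    J = Jgen ↔
      (moduleDepth S (S ⧸ J) = 1 ∧ Order.krullDim (PrimeSpectrum (S ⧸ J)) = 1) :=
  stmt_8_general p hp hdimp J hrad Jgen hgen
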